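/- arXiv:2102.00750 — 5 statements merged into one kernel-verified Lean document; each statement's English description precedes it below -/
import Mathlib

section
/- For all letters a, b, c ∈ {0,1,2}, every v ∈ h(ab) and every v' ∈ h(c), the word v' does not occur as an internal factor of v; that is, the only possible occurrences of v' in v are as a prefix or as a suffix of v. -/
/-- A word is *square-free* if it contains no factor of the form `u ++ u`
with `u` nonempty. -/
def SqFree {α : Type*} (w : List α) : Prop :=
  ∀ u : List α, u ≠ [] → ¬ (u ++ u) <:+: w

/-- The word `p̂ = 1202120121021201021`. -/
def phat : List (Fin 3) := [1,2,0,2,1,2,0,1,2,1,0,2,1,2,0,1,0,2,1]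

/-- The palindrome `p = mirror(p̂) ++ 0 ++ p̂`. -/
def pal : List (Fin 3) := phat.reverse ++ 0 :: phat

/-- The number of occurrences of a (nonempty) word `u` as a factor of `v`. -/
def occCount (u v : List (Fin 3)) : ℕ :=
  (List.range v.length).countP (fun i => (v.drop i).take u.length == u)

/-- A word `v` is *nice* if `p v p` is square-free and contains exactly two
occurrences of `p̂` and exactly two occurrences of its mirror image. -/
def IsNice (v : List (Fin 3)) : Prop :=
  SqFree (pal ++ v ++ pal) ∧ occCount phat (pal ++ v ++ pal) = 2 ∧
    occCount phat.reverse (pal ++ v ++ pal) = 2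

/-- `lword n` is the lexicographically least nice word of length `n`
(the empty word if no nice word of length `n` exists). -/
noncomputable def lword (n : ℕ) : List (Fin 3) := by
  classical
  exact if h : {w : List (Fin 3) | IsNice w ∧ w.length = n}.Nonempty then
    Set.IsWF.min
      (Set.Finite.isWF
        ((List.finite_length_eq (Fin 3) n).subset (fun _ hw => hw.2))) h
  else []

/-- A set of words is *mirror-free* if it does not contain both a word and its
(distinct) mirror image. -/
def MirrorFree (S : Set (List (Fin 3))) : Prop :=
  ∀ w ∈ S, w ≠ w.reverse → w.reverse ∉ S

/-- `S` is an `n`-good set: a mirror-free set of nice words of length `n` such that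
for all `i ∈ {2n+100, …, 7n}` and all distinct `u v ∈ S`, the words
`p u p v p lᵢ`, `p ū p v p lᵢ`, `p u p v̄ p l̄ᵢ` and `p ū p v̄ p l̄ᵢ` are square-free. -/
def GoodSet (n : ℕ) (S : Set (List (Fin 3))) : Prop :=
  (∀ w ∈ S, IsNice w ∧ w.length = n) ∧ MirrorFree S ∧
    ∀ i : ℕ, 2 * n + 100 ≤ i → i ≤ 7 * n → ∀ u ∈ S, ∀ v ∈ S, u ≠ v →
      SqFree (pal ++ u ++ pal ++ v ++ pal ++ lword i) ∧
      SqFree (pal ++ u.reverse ++ pal ++ v ++ pal ++ lword i) ∧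
      SqFree (pal ++ u ++ pal ++ v.reverse ++ pal ++ (lword i).reverse) ∧
      SqFree (pal ++ u.reverse ++ pal ++ v.reverse ++ pal ++ (lword i).reverse)

/-- `mirrorIf r w` is the mirror image of `w` if `r = true`, and `w` itself otherwise. -/
def mirrorIf (r : Bool) (w : List (Fin 3)) : List (Fin 3) :=
  if r then w.reverse else w

/-- The nondeterministic substitution `h`. -/
def himg : Fin 3 → Set (List (Fin 3)) :=
  ![{[0,1,2,1,0,2,1,2,0,2,1,0,2,0,1,0,2,1,2,0,1,2,1,0],
     [0,1,2,1,0,2,1,2,0,2,1,0,2,0,1,2,0,2,1,2,0,1,2,1,0]},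
    {[1,2,0,2,1,0,2,0,1,0,2,1,0,1,2,1,0,2,0,1,2,0,2,1],
     [1,2,0,2,1,0,2,0,1,0,2,1,0,1,2,0,1,0,2,0,1,2,0,2,1]},
    {[2,0,1,0,2,1,0,1,2,1,0,2,1,2,0,2,1,0,1,2,0,1,0,2],
     [2,0,1,0,2,1,0,1,2,1,0,2,1,2,0,1,2,1,0,1,2,0,1,0,2]}]

/-- `v` is an image of `w` under the substitution `h`: `v` is obtained by replacing
each letter `c` of `w` by some word of `himg c`. -/
def IsImage (w v : List (Fin 3)) : Prop :=
  ∃ vs : List (List (Fin 3)), List.Forall₂ (fun c u => u ∈ himg c) w vs ∧ v = vs.flatten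

/-!
Two images of letters never overlap in six or more letters unless they coincide. An image of a
letter has at least twenty-four letters, so wherever it occurs in a product of two images it
overlaps one of the two factors in at least six letters and hence coincides with that factor.
-/

/-- A set of words is *comma-free* if no member occurs internally in a product of two members. -/
def CommaFree {α : Type*} (B : Set (List α)) : Prop :=
  ∀ u ∈ B, ∀ w ∈ B, ∀ v ∈ B, ∀ x y : List α, u ++ w = x ++ v ++ y → x = [] ∨ y = []

/-- Two members `u` and `v` of `B` overlap in `n` or more letters only if they coincide. Here `v` is
laid over `u` from the start of the suffix `r` of `u` on, and `v <+: r` is the case in which `v`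
does not extend beyond the end of `u`. -/
def OverlapsShorterThan {α : Type*} (n : ℕ) (B : Set (List α)) : Prop :=
  ∀ u ∈ B, ∀ v ∈ B, ∀ r, r <:+ u → n ≤ r.length → r <+: v ∨ v <+: r → r = u ∧ u = v

section Overlaps

variable {α : Type*} {n : ℕ} {B : Set (List α)}

theorem OverlapsShorterThan.eq_nil_and_eq (hB : OverlapsShorterThan n B) {u v w x y : List α}
    (hu : u ∈ B) (hv : v ∈ B) (h : u ++ w = x ++ v ++ y) (hx : x.length + n ≤ u.length) :
    x = [] ∧ u = v := by
  have hxu : x <+: u :=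
    List.prefix_of_prefix_length_le ⟨v ++ y, by simp [h]⟩ (List.prefix_append u w) (by lia)
  obtain ⟨r, rfl⟩ := hxu
  have hr : r ++ w = v ++ y := by simpa using h
  have hcompat : r <+: v ∨ v <+: r :=
    List.prefix_or_prefix_of_prefix ⟨w, hr⟩ (List.prefix_append v y)
  have hlen : n ≤ r.length := by simpa using hx
  simpa using hB _ hu v hv r (List.suffix_append x r) hlen hcompat

theorem OverlapsShorterThan.commaFree (hB : OverlapsShorterThan n B)
    (hlen : ∀ u ∈ B, 2 * n ≤ u.length) : CommaFree B := by
  intro u hu w hw v hv x y h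
  rcases le_or_gt (x.length + n) u.length with hx | hx
  · exact .inl (hB.eq_nil_and_eq hu hv h hx).1
  right
  have hv_len := hlen v hv
  rw [List.append_assoc, List.append_eq_append_iff] at h
  rcases h with ⟨s, -, hw_eq⟩ | ⟨s, rfl, hvy⟩
  · have hs_len : s.length + n ≤ w.length := by
      simp only [hw_eq, List.length_append]
      lia
    obtain ⟨rfl, rfl⟩ := hB.eq_nil_and_eq (w := []) hw hv (by simpa using hw_eq) hs_len
    simpa using hw_eq
  · have hs_len : s.length + n ≤ v.length := by
      rw [List.length_append] at hx
      lia
    obtain ⟨rfl, rfl⟩ := hB.eq_nil_and_eq (y := []) hv hw (by simpa using hvy) hs_len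
    simpa using hvy

end Overlaps

/-- The images of the letter `c` as a list, which makes statements about them decidable: both are
the corresponding images of `0` with `c` added to every letter modulo 3. -/
def letterImages (c : Fin 3) : List (List (Fin 3)) :=
  [[0,1,2,1,0,2,1,2,0,2,1,0,2,0,1,0,2,1,2,0,1,2,1,0].map (· + c),
   [0,1,2,1,0,2,1,2,0,2,1,0,2,0,1,2,0,2,1,2,0,1,2,1,0].map (· + c)]

theorem mem_himg_iff_mem_letterImages {c : Fin 3} {u : List (Fin 3)} :
    u ∈ himg c ↔ u ∈ letterImages c := by
  fin_cases c <;> simp [himg, letterImages]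

theorem le_length_of_mem_himg {c : Fin 3} {u : List (Fin 3)} (hu : u ∈ himg c) :
    24 ≤ u.length := by
  have hcheck : ∀ c, ∀ u ∈ letterImages c, 24 ≤ u.length := by decide
  exact hcheck c u (mem_himg_iff_mem_letterImages.mp hu)

/- Six is optimal: `01210` is both a prefix and a suffix of each image of `0`. -/
theorem overlapsShorterThan_iUnion_himg : OverlapsShorterThan 6 (⋃ c, himg c) := by
  have hcheck : ∀ a c, ∀ u ∈ letterImages a, ∀ v ∈ letterImages c, ∀ r ∈ u.tails,
      6 ≤ r.length → r <+: v ∨ v <+: r → r = u ∧ u = v := by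
    decide
  intro u hu v hv r hr
  obtain ⟨a, ha⟩ := Set.mem_iUnion.mp hu
  obtain ⟨c, hc⟩ := Set.mem_iUnion.mp hv
  exact hcheck a c u (mem_himg_iff_mem_letterImages.mp ha) v (mem_himg_iff_mem_letterImages.mp hc)
    r ((List.mem_tails r u).mpr hr)

theorem commaFree_iUnion_himg : CommaFree (⋃ c, himg c) := by
  refine overlapsShorterThan_iUnion_himg.commaFree fun u hu => ?_
  obtain ⟨c, hc⟩ := Set.mem_iUnion.mp hu
  have := le_length_of_mem_himg hc
  lia

theorem isImage_pair_iff {a b : Fin 3} {v : List (Fin 3)} :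
    IsImage [a, b] v ↔ ∃ u ∈ himg a, ∃ w ∈ himg b, v = u ++ w := by
  constructor
  · rintro ⟨_, _ | ⟨hu, _ | ⟨hw, _ | _⟩⟩, rfl⟩
    exact ⟨_, hu, _, hw, by simp⟩
  · rintro ⟨u, hu, w, hw, rfl⟩
    exact ⟨[u, w], .cons hu (.cons hw .nil), by simp⟩

/-- Images of single letters under `h` only occur in images of two-letter words
as prefixes or suffixes, never internally. -/
theorem h_synchronizes (a b c : Fin 3) (v : List (Fin 3)) (hv : IsImage [a, b] v)
    (v' : List (Fin 3)) (hv' : v' ∈ himg c)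
    (x y : List (Fin 3)) (hxy : v = x ++ v' ++ y) :
    x = [] ∨ y = [] := by
  obtain ⟨u, hu, w, hw, rfl⟩ := isImage_pair_iff.mp hv
  exact commaFree_iUnion_himg u (Set.mem_iUnion_of_mem a hu) w (Set.mem_iUnion_of_mem b hw)
    v' (Set.mem_iUnion_of_mem c hv') x y hxy
end

section
/- If a ∈ {1,2}, b ∈ {0,1,2}\{a}, and v ∈ h(0ab), then the word p v is square-free and contains exactly one occurrence of p̂ and exactly one occurrence of p̄̂ as factors. -/
/-! A square of period `k` is a stretch of `k` consecutive positions at which a word agrees with its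
shift by `k`, so one linear scan per period decides square-freeness. With it the 32 words `p v` are
inspected one by one.

The occurrence counts need no such enumeration and hold for images of arbitrary words: the blocks
of `h` are longer than `p̂`, so an occurrence lies in `p` and the first block or in two adjacent
blocks, and only the pairs `p x` and `x y` with blocks `x`, `y` have to be inspected. -/

/-- A linear scan for `n` consecutive `true`s in a list of booleans, used to test words for squares
of period `n`. The counter `c` is the number of `true`s still missing from the current run, so a
scan starts as `hasRun n n l`. -/
def hasRun (n : ℕ) : ℕ → List Bool → Bool
  | 0, _ => true
  | _ + 1, [] => false
  | c + 1, true :: l => hasRun n c l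
  | _ + 1, false :: l => hasRun n n l

theorem hasRun_iff {n c : ℕ} {l : List Bool} (hc : c ≤ n) :
    hasRun n c l = true ↔ List.replicate c true <+: l ∨ List.replicate n true <:+: l := by
  induction l generalizing c with
  | nil => cases c <;> cases n <;> simp_all [hasRun]
  | cons b l ih =>
    obtain _ | c := c
    · simp [hasRun]
    obtain ⟨n, rfl⟩ : ∃ m, n = m + 1 := ⟨n - 1, by omega⟩
    cases b
    · simpa [hasRun, ih le_rfl, List.replicate_succ, List.infix_cons_iff] using
        List.IsPrefix.isInfix
    · have hmono : List.replicate n true <+: l → List.replicate c true <+: l :=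
        (List.prefix_replicate_iff.mpr ⟨by simpa using hc, by simp⟩).trans
      simp only [hasRun, ih (Nat.le_of_succ_le hc), List.replicate_succ, List.infix_cons_iff,
        List.cons_prefix_cons, true_and]
      tauto

theorem zipWith_beq_eq_replicate_iff {α : Type*} [DecidableEq α] {k : ℕ} {l m : List α}
    (h : l.length = m.length) :
    List.zipWith (· == ·) l m = List.replicate k true ↔ l = m ∧ l.length = k := by
  induction l generalizing m k with
  | nil => cases m <;> cases k <;> simp_all [List.replicate_succ]
  | cons a l ih => cases m <;> cases k <;> simp_all [List.replicate_succ, and_assoc]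

theorem exists_square_iff_replicate_infix {α : Type*} [DecidableEq α] {k : ℕ} {w : List α} :
    (∃ u, u.length = k ∧ u ++ u <:+: w) ↔
      List.replicate k true <:+: List.zipWith (· == ·) w (w.drop k) := by
  constructor
  · rintro ⟨u, rfl, s, t, rfl⟩
    have hdrop : (s ++ (u ++ u) ++ t).drop u.length = (s ++ u).drop u.length ++ (u ++ t) := by
      rw [← List.drop_append_of_le_length (by simp)]
      simp only [List.append_assoc]
    refine ⟨List.zipWith (· == ·) s ((s ++ u).drop u.length),
      List.zipWith (· == ·) (u ++ t) t, ?_⟩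
    rw [hdrop, ← (zipWith_beq_eq_replicate_iff rfl).mpr ⟨rfl, rfl⟩,
      ← List.zipWith_append (by simp), ← List.zipWith_append (by simp)]
    simp only [List.append_assoc]
  · rintro ⟨_, _, h⟩
    obtain ⟨l, r, l', r', hlen, hw, hdrop, hagree, -⟩ := List.zipWith_eq_append_iff.mp h.symm
    obtain ⟨s, u, s', u', hlen', rfl, rfl, -, hagree⟩ := List.zipWith_eq_append_iff.mp hagree.symm
    simp only [List.length_append] at hlen
    obtain ⟨rfl, rfl⟩ := (zipWith_beq_eq_replicate_iff (by omega)).mp hagree.symm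
    have hshift : s ++ u ++ r = w.take u.length ++ s' ++ (u ++ r') := by
      rw [← hw, List.append_assoc, ← List.append_assoc s', ← hdrop, List.take_append_drop]
    have htake : (s ++ u).length = (w.take u.length ++ s').length := by
      simp only [hw, List.length_append, List.length_take]
      omega
    have hr : r = u ++ r' := List.append_inj_right hshift htake
    exact ⟨u, rfl, s, r', by rw [hw, hr]; simp only [List.append_assoc]⟩

namespace SqFree

variable {α : Type*} [DecidableEq α]

theorem iff_forall_hasRun_eq_false {w : List α} :
    SqFree w ↔ ∀ k < w.length / 2,
      hasRun (k + 1) (k + 1) (List.zipWith (· == ·) w (w.drop (k + 1))) = false := by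
  have hasRun_iff_square (k : ℕ) :
      hasRun k k (List.zipWith (· == ·) w (w.drop k)) = true ↔
        ∃ u, u.length = k ∧ u ++ u <:+: w := by
    rw [hasRun_iff le_rfl, exists_square_iff_replicate_infix]
    exact or_iff_right_of_imp List.IsPrefix.isInfix
  simp only [← Bool.not_eq_true, hasRun_iff_square]
  constructor
  · rintro hw k - ⟨u, hu, hsq⟩
    exact hw u (List.ne_nil_of_length_eq_add_one hu) hsq
  · intro hw u hu hsq
    have hpos : 0 < u.length := List.length_pos_iff.mpr hu
    have hle : 2 * u.length ≤ w.length := by simpa [two_mul] using hsq.length_le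
    exact hw (u.length - 1) (by omega) ⟨u, by omega, hsq⟩

instance : DecidablePred (SqFree (α := α)) := fun _ =>
  decidable_of_iff _ iff_forall_hasRun_eq_false.symm

end SqFree

theorem isImage_nil_iff {v : List (Fin 3)} : IsImage [] v ↔ v = [] := by
  simp [IsImage]

theorem isImage_cons_iff {c : Fin 3} {w v : List (Fin 3)} :
    IsImage (c :: w) v ↔ ∃ x ∈ himg c, ∃ v', IsImage w v' ∧ v = x ++ v' := by
  simp only [IsImage, List.forall₂_cons_left_iff]
  constructor
  · rintro ⟨_, ⟨x, vs, hx, hvs, rfl⟩, rfl⟩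
    exact ⟨x, hx, vs.flatten, ⟨vs, hvs, rfl⟩, List.flatten_cons⟩
  · rintro ⟨x, hx, _, ⟨vs, hvs, rfl⟩, rfl⟩
    exact ⟨x :: vs, ⟨x, vs, hx, hvs, rfl⟩, List.flatten_cons.symm⟩

theorem forall_isImage_nil {P : List (Fin 3) → Prop} : (∀ v, IsImage [] v → P v) ↔ P [] := by
  simp only [isImage_nil_iff, forall_eq]

theorem forall_isImage_cons {c : Fin 3} {w : List (Fin 3)} {P : List (Fin 3) → Prop} :
    (∀ v, IsImage (c :: w) v → P v) ↔ ∀ x ∈ himg c, ∀ v, IsImage w v → P (x ++ v) := by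
  simp only [isImage_cons_iff]
  exact ⟨fun h x hx v hv => h _ ⟨x, hx, v, hv, rfl⟩,
    fun h _ ⟨x, hx, v, hv, hxv⟩ => hxv ▸ h x hx v hv⟩

theorem forall_mem_pair {α : Type*} {x y : α} {P : α → Prop} :
    (∀ u ∈ ({x, y} : Set α), P u) ↔ P x ∧ P y := by
  simp only [Set.forall_mem_insert, Set.mem_singleton_iff, forall_eq]

instance decidableForallMemHimg (P : List (Fin 3) → Prop) [DecidablePred P] :
    ∀ c, Decidable (∀ x ∈ himg c, P x)
  | 0 | 1 | 2 => decidable_of_iff _ forall_mem_pair.symm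

instance decidableForallIsImage :
    ∀ (w : List (Fin 3)) (P : List (Fin 3) → Prop) [DecidablePred P],
      Decidable (∀ v, IsImage w v → P v)
  | [], _, _ => decidable_of_iff _ forall_isImage_nil.symm
  | _ :: w, P, _ =>
    haveI := fun x => decidableForallIsImage w (fun v => P (x ++ v))
    decidable_of_iff _ forall_isImage_cons.symm

theorem sqFree_pal_append {a b : Fin 3} (ha : a ≠ 0) (hb : b ≠ a) {v : List (Fin 3)}
    (hv : IsImage [0, a, b] v) : SqFree (pal ++ v) := by
  revert a b v
  decide +kernel

theorem occCount_append (u x y : List (Fin 3)) :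
    occCount u (x ++ y) =
      (List.range x.length).countP (fun i => ((x ++ y).drop i).take u.length == u) +
        occCount u y := by
  simp only [occCount, List.length_append, List.range_add, List.countP_append, List.countP_map,
    Function.comp_def, List.drop_length_add_append]

/-- The overlap `y` is too long for an occurrence of `u` to reach beyond it on both sides. -/
theorem occCount_append_append_add {u y : List (Fin 3)} (h : u.length ≤ y.length + 1)
    (x z : List (Fin 3)) :
    occCount u (x ++ y ++ z) + occCount u y = occCount u (x ++ y) + occCount u (y ++ z) := by
  have window_eq : ∀ i ∈ List.range x.length,
      ((x ++ y ++ z).drop i).take u.length = ((x ++ y).drop i).take u.length := by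
    intro i hi
    rw [List.mem_range] at hi
    rw [List.drop_append_of_le_length (by simp only [List.length_append]; omega),
      List.take_append_of_le_length (by simp only [List.length_drop, List.length_append]; omega)]
  have starts_in_x :
      (List.range x.length).countP (fun i => ((x ++ (y ++ z)).drop i).take u.length == u) =
        (List.range x.length).countP (fun i => ((x ++ y).drop i).take u.length == u) :=
    List.countP_congr fun i hi => by rw [← List.append_assoc, window_eq i hi]
  rw [List.append_assoc, occCount_append u x (y ++ z), occCount_append u x y, starts_in_x]
  ring

theorem le_length_of_mem_himg_s8 : ∀ c, ∀ x ∈ himg c, 24 ≤ x.length := by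
  decide +kernel

/-- Blocks are too long for an occurrence of `u` to straddle one, so only adjacent pairs matter. -/
theorem occCount_append_of_isImage {u q w v : List (Fin 3)} (hu : u.length ≤ 25)
    (hq : ∀ c, ∀ x ∈ himg c, occCount u (q ++ x) = occCount u q)
    (hblocks : ∀ d, ∀ y ∈ himg d, ∀ c, ∀ x ∈ himg c, occCount u (y ++ x) = occCount u y)
    (hv : IsImage w v) : occCount u (q ++ v) = occCount u q := by
  induction w generalizing q v with
  | nil => rw [isImage_nil_iff.mp hv, List.append_nil]
  | cons c w ih =>
    obtain ⟨x, hx, v, hv', rfl⟩ := isImage_cons_iff.mp hv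
    have hlen : u.length ≤ x.length + 1 := by
      have hx24 := le_length_of_mem_himg_s8 c x hx
      omega
    have hsplit := occCount_append_append_add hlen q v
    rw [hq c x hx, ih (hblocks c x hx) hv', List.append_assoc] at hsplit
    exact Nat.add_right_cancel hsplit

theorem occCount_phat_pal_append {w v : List (Fin 3)} (hv : IsImage w v) :
    occCount phat (pal ++ v) = 1 :=
  calc occCount phat (pal ++ v) = occCount phat pal :=
        occCount_append_of_isImage (by decide) (by decide +kernel) (by decide +kernel) hv
    _ = 1 := by decide +kernel

theorem occCount_phat_reverse_pal_append {w v : List (Fin 3)} (hv : IsImage w v) :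
    occCount phat.reverse (pal ++ v) = 1 :=
  calc occCount phat.reverse (pal ++ v) = occCount phat.reverse pal :=
        occCount_append_of_isImage (by decide) (by decide +kernel) (by decide +kernel) hv
    _ = 1 := by decide +kernel

/-- If `a ∈ {1,2}`, `b ≠ a` and `v ∈ h(0ab)`, then `p v` is square-free and
contains exactly one occurrence of `p̂` and one of its mirror image. -/
theorem pal_prefix_image (a b : Fin 3) (ha : a = 1 ∨ a = 2) (hb : b ≠ a)
    (v : List (Fin 3)) (hv : IsImage [0, a, b] v) :
    SqFree (pal ++ v) ∧ occCount phat (pal ++ v) = 1 ∧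
      occCount phat.reverse (pal ++ v) = 1 := by
  have ha0 : a ≠ 0 := by rcases ha with rfl | rfl <;> decide
  exact ⟨sqFree_pal_append ha0 hb hv, occCount_phat_pal_append hv,
    occCount_phat_reverse_pal_append hv⟩
end

section
/- If a ∈ {1,2}, b ∈ {0,1,2}\{a}, and v ∈ h(ba0), then the word v p is square-free and contains exactly one occurrence of p̂ and exactly one occurrence of p̄̂ as factors. -/
/-! There are four pairs `(a, b)` and eight images of `ba0` for each of them, so the claim is a
finite computation. A square of period `m` in `w` is a run of `m` consecutive agreements between
`w` and `w.drop m`; looking for such runs tests each period in linear time. -/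

/-- `l` contains `n` consecutive `true`s, where the `n - k` entries just before `l` already are
`true`. The counter `k` of missing entries makes this a single pass through `l`. -/
def hasTrueRun (n : ℕ) : ℕ → List Bool → Bool
  | 0, _ => true
  | _ + 1, [] => false
  | _ + 1, false :: l => hasTrueRun n n l
  | k + 1, true :: l => hasTrueRun n k l

theorem hasTrueRun_iff {n k : ℕ} (hk : k ≤ n) (l : List Bool) :
    hasTrueRun n k l ↔ List.replicate k true <+: l ∨ List.replicate n true <:+: l := by
  induction l generalizing k with
  | nil =>
    cases k with
    | zero => simp [hasTrueRun]
    | succ k => simpa [hasTrueRun] using Nat.ne_zero_of_lt hk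
  | cons c l ih =>
    obtain _ | k := k
    · simp [hasTrueRun]
    obtain ⟨n, rfl⟩ : ∃ m, n = m + 1 := ⟨n - 1, by omega⟩
    cases c with
    | false =>
      simpa [hasTrueRun, ih le_rfl, List.infix_cons_iff, List.replicate_succ] using
        List.IsPrefix.isInfix
    | true =>
      have hprefix : List.replicate n true <+: l → List.replicate k true <+: l :=
        (List.prefix_replicate_iff.2 ⟨by simp; omega, by simp⟩).trans
      simp only [hasTrueRun, ih (by omega : k ≤ n + 1), List.replicate_succ,
        List.cons_prefix_cons, true_and, List.infix_cons_iff]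
      tauto

theorem hasTrueRun_self_iff (n : ℕ) (l : List Bool) :
    hasTrueRun n n l ↔ List.replicate n true <:+: l := by
  rw [hasTrueRun_iff le_rfl, or_iff_right_of_imp List.IsPrefix.isInfix]

section SquareFree

variable {α : Type*} [DecidableEq α]

theorem zipWith_beq_eq_replicate_true_iff {u v : List α} (h : u.length = v.length) :
    List.zipWith (· == ·) u v = List.replicate u.length true ↔ u = v := by
  induction u generalizing v with
  | nil => cases v <;> simp_all
  | cons a u ih => cases v <;> simp_all [List.replicate_succ]

theorem exists_append_self_isInfix_iff (w : List α) (m : ℕ) :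
    (∃ u : List α, u.length = m ∧ u ++ u <:+: w) ↔
      List.replicate m true <:+: List.zipWith (· == ·) w (w.drop m) := by
  constructor
  · rintro ⟨u, rfl, s, t, rfl⟩
    have hdrop : (s ++ (u ++ u) ++ t).drop u.length = (s ++ u).drop u.length ++ (u ++ t) := by
      rw [← List.drop_append_of_le_length (by simp)]
      simp only [List.append_assoc]
    rw [hdrop, ← (zipWith_beq_eq_replicate_true_iff rfl).2 (rfl : u = u), List.append_assoc,
      List.append_assoc, List.zipWith_append (by simp), List.zipWith_append rfl,
      ← List.append_assoc]
    exact List.infix_append _ _ _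
  · rintro ⟨A, B, h⟩
    obtain ⟨su, t, su', t', hlen, hw, hdrop, hA, -⟩ := List.zipWith_eq_append_iff.1 h.symm
    obtain ⟨s, u, s', u', hs, rfl, rfl, -, hu⟩ := List.zipWith_eq_append_iff.1 hA.symm
    have huu' : u.length = u'.length := by simpa [hs] using hlen
    have hum : u.length = m := by simpa [← huu'] using (congrArg List.length hu).symm
    obtain rfl : u = u' := (zipWith_beq_eq_replicate_true_iff huu').1 (by rw [← hu, hum])
    have ht : t = u ++ t' := by
      calc t = ((s ++ u ++ t).drop s.length).drop m := by simp [← hum]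
        _ = (w.drop m).drop s.length := by rw [← hw, List.drop_drop, List.drop_drop, add_comm]
        _ = u ++ t' := by simp [hdrop, hs]
    exact ⟨u, hum, s, t', by simp [hw, ht]⟩

theorem sqFree_iff_forall_not_hasTrueRun (w : List α) :
    SqFree w ↔ ∀ n < w.length / 2,
      ¬ hasTrueRun (n + 1) (n + 1) (List.zipWith (· == ·) w (w.drop (n + 1))) := by
  simp only [hasTrueRun_self_iff, ← exists_append_self_isInfix_iff, SqFree]
  constructor
  · rintro h n - ⟨u, hu, hsquare⟩
    exact h u (List.ne_nil_of_length_eq_add_one hu) hsquare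
  · rintro h (_ | ⟨c, u⟩) hu hsquare
    · exact hu rfl
    · have hlength := hsquare.length_le
      exact h u.length (by grind) ⟨_, rfl, hsquare⟩

instance decidableSqFree (w : List α) : Decidable (SqFree w) :=
  decidable_of_iff _ (sqFree_iff_forall_not_hasTrueRun w).symm

end SquareFree

/-- The two words of `himg c`, the shorter one first. They are encoded through the cyclic
symmetry of `h`: adding `c` to every letter turns the images of `0` into those of `c`. -/
def himgList (c : Fin 3) : List (List (Fin 3)) :=
  [[0,1,2,1,0,2,1,2,0,2,1,0,2,0,1,0,2,1,2,0,1,2,1,0],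
   [0,1,2,1,0,2,1,2,0,2,1,0,2,0,1,2,0,2,1,2,0,1,2,1,0]].map (List.map (· + c))

theorem mem_himgList_iff {c : Fin 3} {u : List (Fin 3)} : u ∈ himgList c ↔ u ∈ himg c := by
  fin_cases c <;> simp [himgList, himg]

/-- The images of `w` under `h`, listed explicitly so that statements about all of them are
decidable. -/
def images (w : List (Fin 3)) : List (List (Fin 3)) :=
  (w.map himgList).sections.map List.flatten

theorem mem_images_iff {w v : List (Fin 3)} : v ∈ images w ↔ IsImage w v := by
  simp only [images, IsImage, List.mem_map, List.mem_sections, List.forall₂_map_right_iff,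
    mem_himgList_iff, eq_comm (a := v)]
  exact exists_congr fun _ => and_congr_left' ⟨List.Forall₂.flip, List.Forall₂.flip⟩

theorem sqFree_append_pal_of_mem_images :
    ∀ a b : Fin 3, a ≠ 0 → b ≠ a → ∀ v ∈ images [b, a, 0], SqFree (v ++ pal) := by
  decide +kernel

theorem occCount_append_pal_of_mem_images :
    ∀ a b : Fin 3, a ≠ 0 → b ≠ a → ∀ v ∈ images [b, a, 0],
      occCount phat (v ++ pal) = 1 ∧ occCount phat.reverse (v ++ pal) = 1 := by
  decide +kernel

/-- If `a ∈ {1,2}`, `b ≠ a` and `v ∈ h(ba0)`, then `v p` is square-free and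
contains exactly one occurrence of `p̂` and one of its mirror image. -/
theorem pal_suffix_image (a b : Fin 3) (ha : a = 1 ∨ a = 2) (hb : b ≠ a)
    (v : List (Fin 3)) (hv : IsImage [b, a, 0] v) :
    SqFree (v ++ pal) ∧ occCount phat (v ++ pal) = 1 ∧
      occCount phat.reverse (v ++ pal) = 1 := by
  have ha0 : a ≠ 0 := by rcases ha with rfl | rfl <;> decide
  have hv' : v ∈ images [b, a, 0] := mem_images_iff.2 hv
  exact ⟨sqFree_append_pal_of_mem_images a b ha0 hb v hv',
    occCount_append_pal_of_mem_images a b ha0 hb v hv'⟩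
end

section
/- Let w be a word over {0,1,2} with |w| ≥ 4 such that the word 10w01 is square-free. Then every v ∈ h(0w0) is nice. -/
/-!
Write `v` as a product of images of single letters under `h` and treat `p` as a third image of the
letter `1`: then `p v p` is a product of blocks that codes the square-free word `10w01`. The letters
around a position tell whether a boundary of blocks is there. A square of large period in `p v p`
therefore matches boundaries with boundaries, hence blocks with blocks that code the same letter,
because the first and the last letter of a block are the letter it codes; so it descends to a square
in `10w01`. A sufficiently long part of a square of small period, and any occurrence of `p̂` or its
mirror image, lies within at most four consecutive blocks, which leaves finitely many cases.
-/

section Factors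

variable {α : Type*} {x y : List α}

/-- The factor of length `m` of the word `x` that starts at position `i`, cut off where `x` ends. -/
def factorAt (x : List α) (i m : ℕ) : List α := (x.drop i).take m

theorem factorAt_eq_iff {i j m : ℕ} :
    factorAt x i m = factorAt y j m ↔ ∀ t < m, x[i + t]? = y[j + t]? := by
  simp only [factorAt, List.ext_getElem?_iff, List.getElem?_take, List.getElem?_drop]
  exact forall_congr' fun t => by split <;> simp_all

theorem factorAt_append_append {z : List α} {i m : ℕ} (h : i + m ≤ y.length) :
    factorAt (x ++ y ++ z) (x.length + i) m = factorAt y i m := by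
  rw [factorAt, List.append_assoc, ← List.drop_drop, List.drop_left,
    List.drop_append_of_le_length (by omega),
    List.take_append_of_le_length (by rw [List.length_drop]; omega), factorAt]

theorem SqFree.of_isInfix (hy : SqFree y) (h : x <:+: y) : SqFree x :=
  fun u hu hux => hy u hu (hux.trans h)

theorem sqFree_iff_factorAt_ne : SqFree x ↔
    ∀ i q, 0 < q → i + 2 * q ≤ x.length → factorAt x i q ≠ factorAt x (i + q) q := by
  constructor
  · intro hx i q hq hi heq
    have hne : factorAt x i q ≠ [] := by
      rw [← List.length_pos_iff, factorAt, List.length_take, List.length_drop]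
      omega
    refine hx _ hne ⟨x.take i, x.drop (i + q + q), ?_⟩
    nth_rw 2 [heq]
    simp only [factorAt, ← List.drop_drop, List.append_assoc, List.take_append_drop]
  · rintro h u hu ⟨a, b, rfl⟩
    have hu' := List.length_pos_iff.mpr hu
    refine h a.length u.length hu' (by simp; omega) ?_
    have h₁ := factorAt_append_append (x := a) (y := u ++ u) (z := b) (i := 0) (m := u.length)
      (by simp)
    have h₂ := factorAt_append_append (x := a) (y := u ++ u) (z := b) (i := u.length)
      (m := u.length) (by simp)
    rw [add_zero] at h₁
    rw [h₁, h₂]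
    simp [factorAt]

theorem SqFree.factorAt_ne (hx : SqFree x) {i q : ℕ} (hq : 0 < q) (hi : i < x.length) :
    factorAt x i q ≠ factorAt x (i + q) q := by
  intro heq
  have hlen := congrArg List.length heq
  simp only [factorAt, List.length_take, List.length_drop] at hlen
  exact sqFree_iff_factorAt_ne.mp hx i q hq (by omega) heq

end Factors

section Blocks

variable {α : Type*} {s t : List (List α)}

/-- A factor that meets more than `k + 1` blocks contains `k` of them entirely and at least one
letter on either side. -/
theorem exists_window_of_le_length {n k m i : ℕ} (hn : ∀ u ∈ s, n ≤ u.length)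
    (hk : k + 1 ≤ s.length) (hm : m ≤ n * k + 1) (hi : i + m ≤ s.flatten.length) :
    ∃ A l C r, s = A ++ l ++ C ∧ l.length = k + 1 ∧ i = A.flatten.length + r ∧
      r + m ≤ l.flatten.length := by
  induction s generalizing i with
  | nil => simp at hk
  | cons u s ih =>
    rw [List.forall_mem_cons] at hn
    rw [List.flatten_cons, List.length_append] at hi
    rw [List.length_cons] at hk
    rcases lt_or_ge i u.length with hiu | hiu
    · refine ⟨[], u :: s.take k, s.drop k, i, by simp, by simp; omega, by simp, ?_⟩
      have hlen : (s.take k).length * n ≤ (s.take k).flatten.length := by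
        rw [List.length_flatten, ← smul_eq_mul, ← List.length_map List.length]
        refine List.card_nsmul_le_sum _ _ fun a ha => ?_
        obtain ⟨v, hv, rfl⟩ := List.mem_map.mp ha
        exact hn.2 v (List.mem_of_mem_take hv)
      rw [List.length_take, min_eq_left (by omega), mul_comm] at hlen
      rw [List.flatten_cons, List.length_append]
      omega
    · rcases (show k + 1 ≤ s.length ∨ s.length = k by omega) with hks | hks
      · obtain ⟨A, l, C, r, rfl, hl, hr, hrm⟩ :=
          ih (i := i - u.length) hn.2 hks (by omega)
        exact ⟨u :: A, l, C, r, rfl, hl, by rw [List.flatten_cons, List.length_append]; omega, hrm⟩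
      · exact ⟨[], u :: s, [], i, by simp, by simp [hks], by simp, by simpa using hi⟩

/-- The index of the block of `s` that contains position `j` of `s.flatten`; positions beyond the
end get the index `s.length`. -/
def blockIndex : List (List α) → ℕ → ℕ
  | [], _ => 0
  | u :: s, j => if j < u.length then 0 else blockIndex s (j - u.length) + 1

theorem blockIndex_eq_zero {u : List α} {j : ℕ} (hj : j < u.length) :
    blockIndex (u :: s) j = 0 := by
  rw [blockIndex, if_pos hj]

theorem blockIndex_length_add (u : List α) (j : ℕ) :
    blockIndex (u :: s) (u.length + j) = blockIndex s j + 1 := by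
  rw [blockIndex, if_neg (by omega), Nat.add_sub_cancel_left]

theorem blockIndex_append (j : ℕ) :
    blockIndex (t ++ s) (t.flatten.length + j) = t.length + blockIndex s j := by
  induction t with
  | nil => simp
  | cons u t ih =>
    rw [List.flatten_cons, List.length_append, List.cons_append, add_assoc, blockIndex_length_add,
      ih, List.length_cons]
    omega

theorem blockIndex_mono : Monotone (blockIndex s) := by
  induction s with
  | nil => exact monotone_const
  | cons u s ih =>
    intro i j hij
    simp only [blockIndex]
    have := ih (Nat.sub_le_sub_right hij u.length)
    split_ifs <;> omega

theorem blockIndex_lt_length {j : ℕ} (hj : j < s.flatten.length) :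
    blockIndex s j < s.length := by
  induction s generalizing j with
  | nil => simp at hj
  | cons u s ih =>
    rw [List.flatten_cons, List.length_append] at hj
    rw [blockIndex, List.length_cons]
    split_ifs with h
    · omega
    · have := ih (j := j - u.length) (by omega)
      omega

theorem blockIndex_lt_succ_iff {u v : List α} {j : ℕ} (hj : j + 1 < u.length + v.length) :
    blockIndex (u :: v :: s) j < blockIndex (u :: v :: s) (j + 1) ↔ j + 1 = u.length := by
  simp only [blockIndex]
  split_ifs <;> omega

theorem blockIndex_add_le {d : ℕ} (hs : ∀ u ∈ s, d ≤ u.length) (j : ℕ) :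
    blockIndex s (j + d) ≤ blockIndex s j + 1 := by
  induction s generalizing j with
  | nil => simp [blockIndex]
  | cons u s ih =>
    rw [List.forall_mem_cons] at hs
    rcases lt_or_ge j u.length with hj | hj
    · rcases lt_or_ge (j + d) u.length with hjd | hjd
      · simp [blockIndex_eq_zero hjd]
      · obtain ⟨e, he⟩ := Nat.exists_eq_add_of_le hjd
        rw [he, blockIndex_length_add, blockIndex_eq_zero hj]
        cases s with
        | nil => simp [blockIndex]
        | cons v s => rw [blockIndex_eq_zero (by have := hs.2 v (by simp); omega)]
    · obtain ⟨e, rfl⟩ := Nat.exists_eq_add_of_le hj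
      rw [add_assoc, blockIndex_length_add, blockIndex_length_add]
      exact Nat.succ_le_succ (ih hs.2 e)

theorem blockIndex_lt_add {d j : ℕ} (ht : ∀ u ∈ t, u.length ≤ d) (hj : j < t.flatten.length) :
    blockIndex (t ++ s) j < blockIndex (t ++ s) (j + d) := by
  induction t generalizing j with
  | nil => simp at hj
  | cons u t ih =>
    rw [List.forall_mem_cons] at ht
    rw [List.flatten_cons, List.length_append] at hj
    rw [List.cons_append]
    rcases lt_or_ge j u.length with hju | hju
    · obtain ⟨e, he⟩ := Nat.exists_eq_add_of_le (show u.length ≤ j + d by omega)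
      rw [blockIndex_eq_zero hju, he, blockIndex_length_add]
      omega
    · obtain ⟨e, rfl⟩ := Nat.exists_eq_add_of_le hju
      rw [add_assoc, blockIndex_length_add, blockIndex_length_add]
      exact Nat.succ_lt_succ (ih ht.2 (by omega))

theorem getElem?_flatten_of_blockIndex_lt {f : List α → α}
    (hf : ∀ u ∈ s, u.head? = some (f u) ∧ u.getLast? = some (f u)) {j : ℕ}
    (hj : blockIndex s j < blockIndex s (j + 1)) :
    s.flatten[j]? = (s.map f)[blockIndex s j]? ∧
      s.flatten[j + 1]? = (s.map f)[blockIndex s (j + 1)]? := by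
  induction s generalizing j with
  | nil => simp [blockIndex] at hj
  | cons u s ih =>
    rw [List.forall_mem_cons] at hf
    rw [List.flatten_cons, List.map_cons]
    rcases lt_trichotomy (j + 1) u.length with hju | hju | hju
    · simp [blockIndex_eq_zero hju] at hj
    · have hstart : blockIndex (u :: s) u.length = blockIndex s 0 + 1 := blockIndex_length_add u 0
      rw [blockIndex_eq_zero (show j < u.length by omega), hju, hstart,
        List.getElem?_append_left (by omega),
        List.getElem?_append_right (by omega), List.getElem?_cons_succ]
      constructor
      · rw [List.getElem?_cons_zero, ← hf.1.2, List.getLast?_eq_getElem?, ← hju,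
          Nat.add_sub_cancel]
      · cases s with
        | nil => simp [blockIndex]
        | cons v s =>
          have hv := (hf.2 v (by simp)).1
          have hv' : 0 < v.length := List.length_pos_iff.mpr (by rintro rfl; simp at hv)
          rw [blockIndex_eq_zero hv', Nat.sub_self, List.flatten_cons,
            List.getElem?_append_left hv', ← List.head?_eq_getElem?, hv]
          rfl
    · obtain ⟨e, rfl⟩ := Nat.exists_eq_add_of_le (show u.length ≤ j by omega)
      rw [add_assoc, blockIndex_length_add, blockIndex_length_add] at hj ⊢
      rw [List.getElem?_append_right (by omega), List.getElem?_append_right (by omega),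
        Nat.add_sub_cancel_left, Nat.add_sub_cancel_left]
      exact ih hf.2 (Nat.lt_of_succ_lt_succ hj)

end Blocks

section Synchronization

variable {α : Type*} {κ : ℕ → ℕ} {X W : ℕ → α} {a c q : ℕ}

theorem exists_jump (hstep : ∀ j, κ (j + 1) ≤ κ j + 1) {k : ℕ} (hak : κ a ≤ k) (hkc : k < κ c)
    (hac : a ≤ c) : ∃ j, a ≤ j ∧ j < c ∧ κ j = k ∧ κ (j + 1) = k + 1 := by
  induction c, hac using Nat.le_induction with
  | base => omega
  | succ c hac ih =>
    have := hstep c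
    rcases lt_or_ge k (κ c) with h | h
    · obtain ⟨j, haj, hjc, hj⟩ := ih h
      exact ⟨j, haj, by omega, hj⟩
    · exact ⟨c, hac, by omega, by omega, by omega⟩

theorem shift_eq_of_jumps_iff (hmono : Monotone κ) (hstep : ∀ j, κ (j + 1) ≤ κ j + 1)
    (hsync : ∀ j, a ≤ j → j < c → (κ j < κ (j + 1) ↔ κ (j + q) < κ (j + q + 1)))
    {j : ℕ} (haj : a ≤ j) (hjc : j ≤ c) : κ (j + q) + κ a = κ j + κ (a + q) := by
  induction j, haj using Nat.le_induction with
  | base => omega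
  | succ j haj ih =>
    have := ih (by omega)
    have := hsync j haj (by omega)
    have := hstep j
    have := hstep (j + q)
    have := hmono (Nat.le_succ j)
    have := hmono (Nat.le_succ (j + q))
    rw [show j + 1 + q = j + q + 1 by omega]
    grind

/-- Read `κ j` as the block that contains position `j` of the word `X`, and `W k` as the letter
coded by block `k`, which is also the first and the last letter of that block. If the boundaries
between blocks recur with period `q` in the interval `[a, c]`, and so does `X`, then the letters of
the blocks recur as well, with the period by which the shift by `q` changes `κ`. -/
theorem exists_square_of_synchronized (hmono : Monotone κ) (hstep : ∀ j, κ (j + 1) ≤ κ j + 1)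
    (hletter : ∀ j, κ j < κ (j + 1) → X j = W (κ j) ∧ X (j + 1) = W (κ (j + 1)))
    (hperiod : ∀ j, a ≤ j → j ≤ c → X j = X (j + q))
    (hsync : ∀ j, a ≤ j → j < c → (κ j < κ (j + 1) ↔ κ (j + q) < κ (j + q + 1)))
    (hac : κ a < κ c) (hcq : c ≤ a + q) (hgap : κ (a + q) ≤ κ c + 1) :
    ∃ d, 0 < d ∧ κ a + 2 * d ≤ κ (c + q) + 1 ∧ ∀ t < d, W (κ a + t) = W (κ a + d + t) := by
  have hac' : a ≤ c := (hmono.reflect_lt hac).le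
  have hshift {j : ℕ} (haj : a ≤ j) (hjc : j ≤ c) : κ (j + q) + κ a = κ j + κ (a + q) :=
    shift_eq_of_jumps_iff hmono hstep hsync haj hjc
  have hcq' : κ c ≤ κ (a + q) := hmono hcq
  refine ⟨κ (a + q) - κ a, by omega, by have := hshift hac' le_rfl; omega, fun t ht => ?_⟩
  have hjump {k : ℕ} (hak : κ a ≤ k) (hkc : k < κ c) :
      W k = W (k + (κ (a + q) - κ a)) ∧ W (k + 1) = W (k + 1 + (κ (a + q) - κ a)) := by
    obtain ⟨j, haj, hjc, rfl, hj⟩ := exists_jump hstep hak hkc hac'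
    have hjq : κ (j + q) = κ j + (κ (a + q) - κ a) := by
      have := hshift haj hjc.le
      omega
    have hjq' : κ (j + q + 1) = κ j + 1 + (κ (a + q) - κ a) := by
      have := hshift (j := j + 1) (by omega) hjc
      rw [show j + 1 + q = j + q + 1 by omega] at this
      omega
    obtain ⟨h₁, h₂⟩ := hletter j (by omega)
    obtain ⟨h₁', h₂'⟩ := hletter (j + q) (by omega)
    rw [← hj, ← h₁, ← h₂, hj, ← hjq, ← hjq', ← h₁', ← h₂', hperiod j haj hjc.le,
      hperiod (j + 1) (by omega) hjc, show j + 1 + q = j + q + 1 by omega]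
    exact ⟨rfl, rfl⟩
  rw [add_right_comm]
  rcases lt_or_ge (κ a + t) (κ c) with h | h
  · exact (hjump (by omega) h).1
  · have := (hjump (k := κ a + t - 1) (by omega) (by omega)).2
    rwa [show κ a + t - 1 + 1 = κ a + t by omega] at this

end Synchronization

section Numerals

/-- The base-3 numeral with the letters of `x` as digits, least significant first; it lets the
finite checks below compare factors by arithmetic of natural numbers. -/
def code (x : List (Fin 3)) : ℕ := Nat.ofDigits 3 (x.map Fin.val)

theorem code_factorAt (x : List (Fin 3)) (i m : ℕ) :
    code (factorAt x i m) = code x / 3 ^ i % 3 ^ m := by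
  have hdigit {y : List (Fin 3)} : ∀ d ∈ y.map Fin.val, d < 3 := by simp
  rw [code, code, factorAt, List.map_take,
    ← Nat.ofDigits_mod_pow_eq_ofDigits_take m (by norm_num) _ hdigit, List.map_drop,
    ← Nat.ofDigits_div_pow_eq_ofDigits_drop i (by norm_num) _ hdigit]

/-- Tests on the code `N` of a word that, at each of its first `n` positions, the factor of length
`e` differs from the one that starts `q` letters later. The kernel evaluates `Nat.beq` on numerals
much faster than `==`. -/
def noRepetition (q e : ℕ) : ℕ → ℕ → Bool
  | 0, _ => true
  | n + 1, N => !Nat.beq (N % 3 ^ e) (N / 3 ^ q % 3 ^ e) && noRepetition q e n (N / 3)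

theorem factorAt_ne_of_noRepetition {q e n : ℕ} {x : List (Fin 3)}
    (hx : noRepetition q e n (code x)) {i : ℕ} (hi : i < n) :
    factorAt x i e ≠ factorAt x (i + q) e := by
  suffices ∀ N, noRepetition q e n N → N / 3 ^ i % 3 ^ e ≠ N / 3 ^ (i + q) % 3 ^ e by
    intro heq
    refine this _ hx ?_
    rw [← code_factorAt, ← code_factorAt, heq]
  clear hx
  intro N hN
  induction n generalizing i N with
  | zero => omega
  | succ n ih =>
    rw [noRepetition, Bool.and_eq_true, Bool.not_eq_true', ← Bool.not_eq_true, Nat.beq_eq] at hN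
    cases i with
    | zero => simpa using hN.1
    | succ i =>
      have := ih (i := i) (by omega) (N / 3) hN.2
      rwa [Nat.div_div_eq_div_mul, Nat.div_div_eq_div_mul, ← pow_succ', ← pow_succ',
        add_right_comm i q 1] at this

end Numerals

section Windows

/-- The shorter of the two images of the letter `0` under `h`. -/
def shortBlock : List (Fin 3) := [0,1,2,1,0,2,1,2,0,2,1,0,2,0,1,0,2,1,2,0,1,2,1,0]

/-- The longer of the two images of the letter `0` under `h`. -/
def longBlock : List (Fin 3) := [0,1,2,1,0,2,1,2,0,2,1,0,2,0,1,2,0,2,1,2,0,1,2,1,0]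

/-- The six images of single letters under `h`. The substitution commutes with cyclic shifts of
the alphabet, so they are the shifts of the two images of `0`. -/
def imageBlocks : List (List (Fin 3)) :=
  [0, 1, 2].flatMap fun c => [shortBlock.map (· + c), longBlock.map (· + c)]

/-- The words that `p v p` is composed of when `v` is an image under `h`. The letter coded by a
block is its first one, so that `p` is treated as a third image of `1`. -/
def blocks : List (List (Fin 3)) := pal :: imageBlocks

/-- The condition on consecutive blocks of `p v p` when `v` is an image of `0w0`: the neighbours of
`p` are images of `0`. -/
def Compatible (u v : List (Fin 3)) : Prop := (u = pal → v.headI = 0) ∧ (v = pal → u.headI = 0)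

instance : DecidableRel Compatible := fun _ _ => inferInstanceAs (Decidable (_ ∧ _))

/-- A sequence of blocks is admissible if its neighbours are compatible and the word that it codes
is square-free. -/
structure Admissible (s : List (List (Fin 3))) : Prop where
  mem_blocks : ∀ u ∈ s, u ∈ blocks
  isChain : s.IsChain Compatible
  sqFree : SqFree (s.map List.headI)

theorem Admissible.of_isInfix {l s : List (List (Fin 3))} (hs : Admissible s) (hl : l <:+: s) :
    Admissible l where
  mem_blocks u hu := hs.mem_blocks u (hl.subset hu)
  isChain := by
    obtain ⟨A, C, rfl⟩ := hl
    exact hs.isChain.left_of_append.right_of_append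
  sqFree := hs.sqFree.of_isInfix (hl.map _)

/-- A decidable weakening of admissibility that rules out only the squares of period at most 2 at
the beginning of the coded word. -/
def LocallyAdmissible (l : List (List (Fin 3))) : Prop :=
  l.IsChain Compatible ∧
    ∀ q ∈ [1, 2], factorAt (l.map List.headI) 0 q ≠ factorAt (l.map List.headI) q q

instance : DecidablePred LocallyAdmissible := fun l =>
  inferInstanceAs (Decidable (l.IsChain Compatible ∧
    ∀ q ∈ [1, 2], factorAt (l.map List.headI) 0 q ≠ factorAt (l.map List.headI) q q))

/-- The sequences of `k` blocks in which every suffix is locally admissible. -/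
def windows : ℕ → List (List (List (Fin 3)))
  | 0 => [[]]
  | k + 1 => ((windows k).flatMap fun l => blocks.map (· :: l)).filter LocallyAdmissible

theorem Admissible.mem_windows {l : List (List (Fin 3))} (hl : Admissible l) :
    l ∈ windows l.length := by
  induction l with
  | nil => simp [windows]
  | cons u l ih =>
    have hpos : 0 < ((u :: l).map List.headI).length := by simp
    have hsq : ∀ q ∈ [1, 2], factorAt ((u :: l).map List.headI) 0 q ≠
        factorAt ((u :: l).map List.headI) q q := by
      intro q hq
      have := hl.sqFree.factorAt_ne (i := 0) (q := q) (by grind) hpos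
      rwa [zero_add] at this
    rw [List.length_cons, windows, List.mem_filter, decide_eq_true_iff, List.mem_flatMap]
    exact ⟨⟨l, ih (hl.of_isInfix (List.infix_cons List.infix_rfl)),
      List.mem_map_of_mem (hl.mem_blocks u (by simp))⟩, hl.isChain, hsq⟩

theorem length_of_mem_windows {k : ℕ} {l : List (List (Fin 3))} (hl : l ∈ windows k) :
    l.length = k := by
  induction k generalizing l with
  | zero => simpa [windows] using hl
  | succ k ih =>
    obtain ⟨l', hl', hmem⟩ := List.mem_flatMap.mp (List.mem_of_mem_filter hl)
    obtain ⟨u, -, rfl⟩ := List.mem_map.mp hmem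
    rw [List.length_cons, ih hl']

theorem le_length_of_mem_blocks : ∀ u ∈ blocks, 24 ≤ u.length := by decide

theorem head?_and_getLast?_of_mem_blocks :
    ∀ u ∈ blocks, u.head? = some u.headI ∧ u.getLast? = some u.headI := by decide

theorem length_le_of_mem_imageBlocks : ∀ u ∈ imageBlocks, u.length ≤ 25 := by decide

theorem pal_notMem_imageBlocks : pal ∉ imageBlocks := by decide

theorem Admissible.exists_window {s : List (List (Fin 3))} (hs : Admissible s) {k m i : ℕ}
    (hk : k + 1 ≤ s.length) (hm : m ≤ 24 * k + 1) (hi : i + m ≤ s.flatten.length) :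
    ∃ A C, ∃ l ∈ windows (k + 1), ∃ r, s = A ++ l ++ C ∧ i = A.flatten.length + r ∧
      r + m ≤ l.flatten.length := by
  obtain ⟨A, l, C, r, rfl, hl, hi, hr⟩ :=
    exists_window_of_le_length (fun u hu => le_length_of_mem_blocks u (hs.mem_blocks u hu)) hk hm hi
  exact ⟨A, C, l, hl ▸ (hs.of_isInfix ⟨A, C, rfl⟩).mem_windows, r, rfl, hi, hr⟩

end Windows

section ShortSquares

/-- The number of consecutive blocks within which squares of period `q` are excluded; the thresholds
keep the finite check below true and small. -/
def windowSize (q : ℕ) : ℕ := if q ≤ 12 then 2 else if q ≤ 30 then 3 else 4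

/-- How much of the second half of a square of period `q` is compared with the first one. Since
blocks have at least 24 letters, `q + overlap q` letters always lie within `windowSize q` blocks. -/
def overlap (q : ℕ) : ℕ := min q (24 * (windowSize q - 1) + 1 - q)

set_option maxRecDepth 100000 in
theorem noRepetition_of_mem_windows : ∀ q ∈ List.range' 1 42, ∀ l ∈ windows (windowSize q),
    noRepetition q (overlap q) (l.flatten.length + 1 - (q + overlap q)) (code l.flatten) := by
  decide +kernel

theorem Admissible.factorAt_ne_of_period_le {s : List (List (Fin 3))} (hs : Admissible s)
    (hlen : 4 ≤ s.length) {i q : ℕ} (hq : 0 < q) (hq' : q ≤ 42)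
    (hi : i + 2 * q ≤ s.flatten.length) :
    factorAt s.flatten i q ≠ factorAt s.flatten (i + q) q := by
  intro heq
  obtain ⟨k, hk, hk₄, hkq⟩ : ∃ k, windowSize q = k + 1 ∧ k + 1 ≤ 4 ∧ q ≤ 24 * k + 1 := by
    unfold windowSize
    split_ifs
    exacts [⟨1, by omega⟩, ⟨2, by omega⟩, ⟨3, by omega⟩]
  have hoverlap : overlap q ≤ q := min_le_left _ _
  have hfits : q + overlap q ≤ 24 * k + 1 := by
    rw [overlap, hk]
    omega
  obtain ⟨A, C, l, hl, r, rfl, rfl, hr⟩ := hs.exists_window (i := i) (by omega) hfits (by omega)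
  have hne : factorAt l.flatten r (overlap q) ≠ factorAt l.flatten (r + q) (overlap q) :=
    factorAt_ne_of_noRepetition
      (noRepetition_of_mem_windows q (by rw [List.mem_range'_1]; omega) l (hk ▸ hl)) (by omega)
  have h₁ := factorAt_append_append (x := A.flatten) (z := C.flatten)
    (show r + overlap q ≤ l.flatten.length by omega)
  have h₂ := factorAt_append_append (x := A.flatten) (z := C.flatten)
    (show r + q + overlap q ≤ l.flatten.length by omega)
  rw [List.flatten_append, List.flatten_append, factorAt_eq_iff] at heq
  rw [← add_assoc] at h₂
  exact hne <| h₁.symm.trans <|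
    (factorAt_eq_iff.mpr fun t ht => heq t (ht.trans_le hoverlap)).trans h₂

end ShortSquares

section LongSquares

/-- The factors of length 15 with 11 letters before and 4 letters after a boundary of blocks. No
smaller length recognizes all boundaries. -/
def boundaryWords : List (List (Fin 3)) :=
  (windows 2).map fun l => factorAt l.flatten (l.headI.length - 11) 15

set_option maxRecDepth 100000 in
theorem mem_boundaryWords_iff_of_mem_windows : ∀ l ∈ windows 2, ∀ r < l.flatten.length - 14,
    factorAt l.flatten r 15 ∈ boundaryWords ↔ r + 11 = l.headI.length := by
  decide +kernel

theorem Admissible.mem_boundaryWords_iff {s : List (List (Fin 3))} (hs : Admissible s)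
    (hlen : 2 ≤ s.length) {i : ℕ} (hi : i + 15 ≤ s.flatten.length) :
    factorAt s.flatten i 15 ∈ boundaryWords ↔ blockIndex s (i + 10) < blockIndex s (i + 11) := by
  obtain ⟨A, C, l, hl, r, rfl, rfl, hr⟩ := hs.exists_window (k := 1) hlen (by norm_num) hi
  obtain ⟨u, v, rfl⟩ := List.length_eq_two.mp (length_of_mem_windows hl)
  have hwindow := mem_boundaryWords_iff_of_mem_windows _ hl r (by omega)
  have hr' : r + 10 + 1 < u.length + v.length := by
    simp only [List.flatten_cons, List.flatten_nil, List.append_nil, List.length_append] at hr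
    omega
  rw [List.flatten_append, List.flatten_append, factorAt_append_append hr, hwindow,
    List.append_assoc, add_assoc, add_assoc, blockIndex_append, blockIndex_append,
    add_lt_add_iff_left]
  exact (blockIndex_lt_succ_iff hr').symm

theorem Admissible.boundary_iff_of_factorAt_eq {s : List (List (Fin 3))} (hs : Admissible s)
    (hlen : 2 ≤ s.length) {i q : ℕ} (hi : i + 2 * q ≤ s.flatten.length)
    (heq : factorAt s.flatten i q = factorAt s.flatten (i + q) q) {j : ℕ} (hij : i + 10 ≤ j)
    (hj : j < i + q - 4) :
    blockIndex s j < blockIndex s (j + 1) ↔ blockIndex s (j + q) < blockIndex s (j + q + 1) := by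
  obtain ⟨e, rfl⟩ := Nat.exists_eq_add_of_le hij
  have hfactor : factorAt s.flatten (i + e) 15 = factorAt s.flatten (i + e + q) 15 :=
    factorAt_eq_iff.mpr fun t ht => by
      convert factorAt_eq_iff.mp heq (e + t) (by omega) using 2 <;> omega
  have h₁ := hs.mem_boundaryWords_iff hlen (i := i + e) (by omega)
  have h₂ := hs.mem_boundaryWords_iff hlen (i := i + e + q) (by omega)
  rw [hfactor, h₂] at h₁
  convert h₁.symm using 3 <;> omega

/-- If a period is at least 43, boundaries are recognized in an interval of length at least 29. It
begins at position 10 or later, so that even in the leading `p` it reaches the next boundary. -/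
theorem blockIndex_lt_add_of_pal_notMem {t : List (List (Fin 3))}
    (hs : Admissible (pal :: (t ++ [pal]))) (hp : pal ∉ t) {j : ℕ} (hj : 10 ≤ j)
    (hj' : j < 39 + t.flatten.length) :
    blockIndex (pal :: (t ++ [pal])) j < blockIndex (pal :: (t ++ [pal])) (j + 29) := by
  have hpal : pal.length = 39 := rfl
  have ht : ∀ u ∈ t, u.length ≤ 29 := by
    intro u hu
    have hu' : u ∈ imageBlocks := (List.mem_cons.mp (hs.mem_blocks u (by simp [hu]))).resolve_left
      (by rintro rfl; exact hp hu)
    exact (length_le_of_mem_imageBlocks u hu').trans (by norm_num)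
  rcases lt_or_ge j 39 with h | h
  · obtain ⟨e, he⟩ := Nat.exists_eq_add_of_le (show pal.length ≤ j + 29 by omega)
    rw [blockIndex_eq_zero (by omega), he, blockIndex_length_add]
    omega
  · obtain ⟨e, rfl⟩ := Nat.exists_eq_add_of_le (hpal ▸ h)
    rw [add_assoc, blockIndex_length_add, blockIndex_length_add]
    exact Nat.succ_lt_succ (blockIndex_lt_add ht (by omega))

theorem length_flatten_pal_append_pal (t : List (List (Fin 3))) :
    (pal :: (t ++ [pal])).flatten.length = 39 + t.flatten.length + 39 := by
  simp [show pal.length = 39 from rfl, add_assoc]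

theorem factorAt_ne_of_le_period {t : List (List (Fin 3))} (hs : Admissible (pal :: (t ++ [pal])))
    (hp : pal ∉ t) {i q : ℕ} (hq : 43 ≤ q)
    (hi : i + 2 * q ≤ (pal :: (t ++ [pal])).flatten.length) :
    factorAt (pal :: (t ++ [pal])).flatten i q ≠
      factorAt (pal :: (t ++ [pal])).flatten (i + q) q := by
  intro heq
  have hX := length_flatten_pal_append_pal t
  have hgrowth := blockIndex_lt_add_of_pal_notMem hs hp (j := i + 10) (by omega) (by omega)
  have hlen : 2 ≤ (pal :: (t ++ [pal])).length := by simp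
  generalize pal :: (t ++ [pal]) = s at *
  have hblock (d : ℕ) (hd : d ≤ 24) (j : ℕ) : blockIndex s (j + d) ≤ blockIndex s j + 1 :=
    blockIndex_add_le (fun u hu => hd.trans (le_length_of_mem_blocks u (hs.mem_blocks u hu))) j
  obtain ⟨d, hd, hdle, hsquare⟩ := exists_square_of_synchronized
    (X := fun j => s.flatten[j]?) (W := fun k => (s.map List.headI)[k]?)
    (a := i + 10) (c := i + q - 4) (q := q)
    blockIndex_mono (hblock 1 (by norm_num))
    (fun j => getElem?_flatten_of_blockIndex_lt
      fun u hu => head?_and_getLast?_of_mem_blocks u (hs.mem_blocks u hu))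
    (fun j haj hjc => by
      convert factorAt_eq_iff.mp heq (j - i) (by omega) using 2 <;> omega)
    (fun j => hs.boundary_iff_of_factorAt_eq hlen hi heq)
    (hgrowth.trans_le (blockIndex_mono (by omega))) (by omega)
    (by convert hblock 14 (by norm_num) (i + q - 4) using 2; omega)
  have hlast := blockIndex_lt_length (s := s) (j := i + q - 4 + q) (by omega)
  exact sqFree_iff_factorAt_ne.mp hs.sqFree _ d hd (by rw [List.length_map]; omega)
    (factorAt_eq_iff.mpr hsquare)

theorem sqFree_flatten {t : List (List (Fin 3))} (hs : Admissible (pal :: (t ++ [pal])))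
    (hp : pal ∉ t) (ht : 2 ≤ t.length) : SqFree (pal :: (t ++ [pal])).flatten := by
  refine sqFree_iff_factorAt_ne.mpr fun i q hq hi => ?_
  rcases le_or_gt q 42 with hq' | hq'
  · exact hs.factorAt_ne_of_period_le (by simpa using ht) hq hq' hi
  · exact factorAt_ne_of_le_period hs hp hq' hi

end LongSquares

section Occurrences

theorem occCount_eq_two {u x : List (Fin 3)} {i j : ℕ} (hij : i ≠ j) (hi : i < x.length)
    (hj : j < x.length) (h : ∀ k < x.length, factorAt x k u.length = u ↔ k = i ∨ k = j) :
    occCount u x = 2 := by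
  have hperm : ((List.range x.length).filter fun k => factorAt x k u.length == u).Perm [i, j] := by
    rw [List.perm_ext_iff_of_nodup (List.nodup_range.filter _) (by simpa using hij)]
    intro k
    simp only [List.mem_filter, List.mem_range, beq_iff_eq, List.mem_cons, List.not_mem_nil,
      or_false]
    constructor
    · exact fun hk => (h k hk.1).mp hk.2
    · intro hk
      have hlt : k < x.length := by rcases hk with rfl | rfl <;> assumption
      exact ⟨hlt, (h k hlt).mpr hk⟩
  rw [occCount, List.countP_eq_length_filter]
  exact hperm.length_eq

/-- The pairs of `p̂` or its mirror image and the position at which `p` contains it. -/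
def markers : List (List (Fin 3) × ℕ) := [(phat, 20), (phat.reverse, 0)]

set_option maxRecDepth 100000 in
theorem marker_occurrence_of_mem_windows : ∀ x ∈ markers, ∀ l ∈ windows 2,
    ∀ r < l.flatten.length - 18, factorAt l.flatten r 19 = x.1 →
      l.headI = pal ∧ r = x.2 ∨ l.getLastI = pal ∧ r = l.headI.length + x.2 := by
  decide +kernel

theorem factorAt_pal_of_mem_markers : ∀ x ∈ markers,
    x.1.length = 19 ∧ x.2 + 19 ≤ 39 ∧ factorAt pal x.2 19 = x.1 := by
  decide

theorem eq_nil_of_cons_concat_eq {α : Type*} {a b : α} {t A C : List α} (ha : a ∉ t)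
    (h : a :: (t ++ [a]) = A ++ [a, b] ++ C) : A = [] := by
  rcases A with - | ⟨a', A⟩
  · rfl
  · have htail : t ++ [a] = A ++ [a] ++ b :: C := by simpa using (List.cons.inj h).2
    have ht : t = A ++ [a] ++ (b :: C).dropLast := by
      rw [← List.dropLast_append_of_ne_nil (by simp), ← htail, List.dropLast_concat]
    exact absurd (by simp [ht]) ha

theorem eq_nil_of_cons_concat_eq' {α : Type*} {a b : α} {t A C : List α} (ha : a ∉ t)
    (h : a :: (t ++ [a]) = A ++ [b, a] ++ C) : C = [] := by
  refine List.reverse_eq_nil_iff.mp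
    (eq_nil_of_cons_concat_eq (b := b) (t := t.reverse) (C := A.reverse) (by simpa using ha) ?_)
  simpa using congrArg List.reverse h

theorem eq_or_eq_of_factorAt_eq_marker {t : List (List (Fin 3))}
    (hs : Admissible (pal :: (t ++ [pal]))) (hp : pal ∉ t) {x : List (Fin 3) × ℕ}
    (hx : x ∈ markers) {k : ℕ} (hk : factorAt (pal :: (t ++ [pal])).flatten k 19 = x.1) :
    k = x.2 ∨ k = 39 + t.flatten.length + x.2 := by
  have hk' : k + 19 ≤ (pal :: (t ++ [pal])).flatten.length := by
    have := congrArg List.length hk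
    rw [factorAt, List.length_take, List.length_drop, (factorAt_pal_of_mem_markers x hx).1] at this
    omega
  obtain ⟨A, C, l, hl, r, hs', rfl, hr⟩ := hs.exists_window (k := 1) (by simp) (by omega) hk'
  obtain ⟨u, v, rfl⟩ := List.length_eq_two.mp (length_of_mem_windows hl)
  have hlength : (A ++ [u, v] ++ C).flatten.length = 39 + t.flatten.length + 39 :=
    hs' ▸ length_flatten_pal_append_pal t
  rw [hs', List.flatten_append, List.flatten_append, factorAt_append_append hr] at hk
  obtain ⟨rfl, rfl⟩ | ⟨rfl, rfl⟩ := marker_occurrence_of_mem_windows x hx _ hl r (by omega) hk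
  · left
    obtain rfl := eq_nil_of_cons_concat_eq hp hs'
    simp
  · right
    obtain rfl := eq_nil_of_cons_concat_eq' hp hs'
    simp only [List.flatten_append, List.flatten_cons, List.flatten_nil, List.append_nil,
      List.length_append, show pal.length = 39 from rfl, List.headI_cons] at hlength ⊢
    omega

theorem occCount_flatten_eq_two {t : List (List (Fin 3))} (hs : Admissible (pal :: (t ++ [pal])))
    (hp : pal ∉ t) {x : List (Fin 3) × ℕ} (hx : x ∈ markers) :
    occCount x.1 (pal :: (t ++ [pal])).flatten = 2 := by
  obtain ⟨hlen, hoffset, hpal⟩ := factorAt_pal_of_mem_markers x hx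
  have hpal' : pal.length = 39 := rfl
  have hX := length_flatten_pal_append_pal t
  have hfirst : factorAt (pal :: (t ++ [pal])).flatten x.2 19 = x.1 := by
    rw [← hpal]
    simpa using
      factorAt_append_append (x := []) (y := pal) (z := t.flatten ++ pal) (hpal' ▸ hoffset)
  have hlast : factorAt (pal :: (t ++ [pal])).flatten (39 + t.flatten.length + x.2) 19 = x.1 := by
    rw [← hpal]
    simpa [hpal'] using
      factorAt_append_append (x := pal ++ t.flatten) (y := pal) (z := []) (hpal' ▸ hoffset)
  refine occCount_eq_two (i := x.2) (j := 39 + t.flatten.length + x.2) (by omega) (by omega)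
    (by omega) fun k _ => hlen ▸ ⟨eq_or_eq_of_factorAt_eq_marker hs hp hx, ?_⟩
  rintro (rfl | rfl)
  exacts [hfirst, hlast]

end Occurrences

section Images

theorem mem_imageBlocks_and_headI_of_mem_himg {c : Fin 3} {u : List (Fin 3)} (hu : u ∈ himg c) :
    u ∈ imageBlocks ∧ u.headI = c := by
  fin_cases c <;> rcases hu with rfl | rfl <;> decide

theorem isChain_compatible {w : List (Fin 3)} {t : List (List (Fin 3))}
    (ht : t.map List.headI = [0] ++ w ++ [0]) (hp : pal ∉ t) :
    (pal :: (t ++ [pal])).IsChain Compatible := by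
  have hhead : t.head?.map List.headI = some 0 := by
    rw [← List.head?_map, ht]
    rfl
  have hlast : t.getLast?.map List.headI = some 0 := by
    rw [← List.getLast?_map, ht, List.getLast?_concat]
  obtain ⟨a, ha, ha₀⟩ := Option.map_eq_some_iff.mp hhead
  obtain ⟨b, hb, hb₀⟩ := Option.map_eq_some_iff.mp hlast
  have hap : a ≠ pal := fun h => hp (h ▸ List.mem_of_head? ha)
  have hbp : b ≠ pal := fun h => hp (h ▸ List.mem_of_getLast? hb)
  have hinner : t.IsChain Compatible :=
    (List.pairwise_of_forall_mem_list fun u hu v hv =>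
      ⟨fun h => absurd (h ▸ hu) hp, fun h => absurd (h ▸ hv) hp⟩).isChain
  rw [List.isChain_cons, List.isChain_append]
  simp [hinner, ha, hb, ha₀, hb₀, hap, hbp, Compatible]

theorem admissible_of_forall₂ {w : List (Fin 3)} {t : List (List (Fin 3))}
    (hsf : SqFree ([1, 0] ++ w ++ [0, 1]))
    (ht : List.Forall₂ (fun c u => u ∈ himg c) ([0] ++ w ++ [0]) t) :
    Admissible (pal :: (t ++ [pal])) ∧ pal ∉ t := by
  have hletters : t.map List.headI = [0] ++ w ++ [0] := by
    have : List.Forall₂ (fun c u => u.headI = c) ([0] ++ w ++ [0]) t :=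
      ht.imp fun _ _ hu => (mem_imageBlocks_and_headI_of_mem_himg hu).2
    exact (List.forall₂_eq_eq_eq ▸
      List.forall₂_map_right_iff.mpr (this.imp fun _ _ => Eq.symm)).symm
  have hblocks : ∀ u ∈ t, u ∈ imageBlocks := by
    intro u hu
    obtain ⟨i, hi, rfl⟩ := List.mem_iff_getElem.mp hu
    exact (mem_imageBlocks_and_headI_of_mem_himg (ht.get (ht.length_eq ▸ hi) hi)).1
  have hp : pal ∉ t := fun h => pal_notMem_imageBlocks (hblocks _ h)
  refine ⟨⟨?_, ?_, ?_⟩, hp⟩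
  · intro u hu
    simp only [List.mem_cons, List.mem_append, List.not_mem_nil, or_false] at hu
    rcases hu with rfl | hu | rfl
    exacts [List.mem_cons_self, List.mem_cons_of_mem _ (hblocks u hu), List.mem_cons_self]
  · exact isChain_compatible hletters hp
  · simpa [hletters, pal, phat] using hsf

end Images

theorem image_is_nice_general (w : List (Fin 3)) (hsf : SqFree ([1, 0] ++ w ++ [0, 1]))
    (v : List (Fin 3)) (hv : IsImage ([0] ++ w ++ [0]) v) : IsNice v := by
  obtain ⟨t, ht, rfl⟩ := hv
  obtain ⟨hs, hp⟩ := admissible_of_forall₂ hsf ht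
  have hlen : 2 ≤ t.length := by simp [← ht.length_eq]
  have hflatten : (pal :: (t ++ [pal])).flatten = pal ++ t.flatten ++ pal := by simp
  rw [IsNice, ← hflatten]
  exact ⟨sqFree_flatten hs hp hlen,
    occCount_flatten_eq_two hs hp (x := (phat, 20)) (by simp [markers]),
    occCount_flatten_eq_two hs hp (x := (phat.reverse, 0)) (by simp [markers])⟩

/-- If `|w| ≥ 4` and `10w01` is square-free, then every image of `0w0` under `h`
is a nice word. -/
theorem image_is_nice (w : List (Fin 3)) (hlen : 4 ≤ w.length)
    (hsf : SqFree ([1, 0] ++ w ++ [0, 1]))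
    (v : List (Fin 3)) (hv : IsImage ([0] ++ w ++ [0]) v) :
    IsNice v :=
  image_is_nice_general w hsf v hv
end

section
/- Let u and v be nice words. If the word p u p v p is not square-free, then u is a prefix of v or v is a suffix of u. In particular, if |u| = |v| and p u p v p is not square-free, then u = v. -/
/-!
If `xx` is a square in `p u p v p` and `p u p`, `p v p` are square-free, then `xx` ends after the
second `p` has ended and starts before that `p` has started. Let `a` be a prefix and `b` a suffix
of `p` that do not overlap, so that the centre of `xx` lies at or before the start of the `b`, or
at or after the end of the `a`, of the second `p`. In the first case that `b` lies in the right
copy of `x`, so `b` also occurs `|x|` letters earlier; when `b` occurs in `p u p` only at the ends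
of the two `p`s this forces `|x| = |p u|`, and then `u` is a prefix of `v p`. If `u` were longer
than `v`, it would be `v c` with `c` a nonempty prefix of `p`, and `u p` would contain `cc`. The
second case is the mirror image of the first.
-/

theorem SqFree.reverse {α : Type*} {w : List α} (h : SqFree w) : SqFree w.reverse := by
  intro x hx hsq
  refine h x.reverse (by simpa only [ne_eq, List.reverse_eq_nil_iff] using hx) ?_
  rwa [← List.reverse_append, ← List.reverse_infix, List.reverse_reverse]

theorem SqFree.prefix_of_prefix_append {α : Type*} {p u v : List α} (h : SqFree (p ++ u ++ p))
    (huv : u <+: v ++ p) : u <+: v := by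
  obtain huv' | ⟨c, rfl⟩ := List.prefix_or_prefix_of_prefix huv (List.prefix_append v p)
  · exact huv'
  · obtain ⟨r, hr⟩ : c <+: p := (List.prefix_append_right_inj v).1 huv
    have hc : c = [] := by
      by_contra hc
      refine h c hc ⟨p ++ v, r, ?_⟩
      calc p ++ v ++ (c ++ c) ++ r = p ++ (v ++ c) ++ (c ++ r) := by
            simp only [List.append_assoc]
        _ = p ++ (v ++ c) ++ p := by rw [hr]
    rw [hc, List.append_nil]

theorem SqFree.length_lt_of_square {α : Type*} {w y s x t : List α} (h : SqFree w) (hx : x ≠ [])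
    (hsq : s ++ x ++ x ++ t = w ++ y) : w.length < (s ++ x ++ x).length := by
  by_contra! hle
  obtain ⟨r, hr⟩ : s ++ x ++ x <+: w :=
    List.prefix_of_prefix_length_le ⟨t, hsq⟩ (List.prefix_append w y) hle
  exact h x hx ⟨s, r, by rwa [← List.append_assoc s x x]⟩

theorem exists_eq_append_of_square {α : Type*} {b r s t x y : List α}
    (hsq : s ++ x ++ x ++ t = r ++ b ++ y) (hstart : (s ++ x).length ≤ r.length)
    (hend : (r ++ b).length ≤ (s ++ x ++ x).length) :
    ∃ c d, x = c ++ b ++ d ∧ r = s ++ x ++ c ∧ y = d ++ t := by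
  obtain ⟨c, rfl⟩ : s ++ x <+: r :=
    List.prefix_of_prefix_length_le ⟨x ++ t, (List.append_assoc ..).symm.trans hsq⟩
      ⟨b ++ y, (List.append_assoc ..).symm⟩ hstart
  have hxt : x ++ t = c ++ b ++ y := by
    simpa only [List.append_assoc, List.append_cancel_left_eq] using hsq
  obtain ⟨d, hd⟩ : c ++ b <+: x := by
    refine List.prefix_of_prefix_length_le ⟨y, hxt.symm⟩ (List.prefix_append x t) ?_
    simp only [List.length_append] at hend ⊢
    omega
  refine ⟨c, d, hd.symm, rfl, ?_⟩
  rw [← hd, List.append_assoc (c ++ b)] at hxt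
  exact (List.append_cancel_left hxt).symm

theorem prefix_append_of_square {α : Type*} {p b u v s x t : List α} (hb : b <:+ p)
    (hub : ∀ s t, s ++ b ++ t = p ++ u ++ p → t = [] ∨ t = u ++ p) (hx : x ≠ [])
    (hsq : s ++ x ++ x ++ t = p ++ u ++ p ++ v ++ p)
    (hcenter : (s ++ x).length + b.length ≤ (p ++ u ++ p).length)
    (hend : (p ++ u ++ p).length ≤ (s ++ x ++ x).length) : u <+: v ++ p := by
  obtain ⟨q, hq⟩ := hb
  have hpup : p ++ u ++ q ++ b = p ++ u ++ p := by rw [List.append_assoc _ q, hq]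
  obtain ⟨c, d, rfl, hr, hvp⟩ : ∃ c d, x = c ++ b ++ d ∧ p ++ u ++ q = s ++ x ++ c ∧
      v ++ p = d ++ t := by
    apply exists_eq_append_of_square
    · rw [hsq, hpup, List.append_assoc _ v]
    · rw [← hpup, List.length_append (bs := b)] at hcenter
      exact Nat.le_of_add_le_add_right hcenter
    · rwa [hpup]
  have hshift : s ++ c ++ b ++ (d ++ c ++ b) = p ++ u ++ p := by
    rw [← hpup, hr]
    simp only [List.append_assoc]
  have hdcb : d ++ c ++ b = u ++ p := by
    refine (hub _ _ hshift).resolve_left fun hnil => hx ?_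
    simp only [List.append_eq_nil_iff] at hnil ⊢
    tauto
  have hscb : s ++ c ++ b = p := by
    rw [hdcb, List.append_assoc p] at hshift
    exact List.append_cancel_right hshift
  have hd : d = u ++ s := by
    apply List.append_cancel_right (bs := c ++ b)
    rw [← List.append_assoc, hdcb, ← hscb]
    simp only [List.append_assoc]
  exact ⟨s ++ t, by rw [hvp, hd, List.append_assoc]⟩

theorem SqFree.prefix_of_square {α : Type*} {p b u v s x t : List α} (hu : SqFree (p ++ u ++ p))
    (hb : b <:+ p) (hub : ∀ s t, s ++ b ++ t = p ++ u ++ p → t = [] ∨ t = u ++ p) (hx : x ≠ [])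
    (hsq : s ++ x ++ x ++ t = p ++ u ++ p ++ v ++ p)
    (hcenter : (s ++ x).length + b.length ≤ (p ++ u ++ p).length) : u <+: v :=
  have hend : (p ++ u ++ p).length < (s ++ x ++ x).length :=
    hu.length_lt_of_square hx (hsq.trans (List.append_assoc _ v p))
  hu.prefix_of_prefix_append (prefix_append_of_square hb hub hx hsq hcenter hend.le)

theorem SqFree.suffix_of_square {α : Type*} {p a u v s x t : List α} (hv : SqFree (p ++ v ++ p))
    (ha : a <+: p) (hva : ∀ s t, s ++ a ++ t = p ++ v ++ p → s = [] ∨ s = p ++ v) (hx : x ≠ [])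
    (hsq : s ++ x ++ x ++ t = p ++ u ++ p ++ v ++ p)
    (hcenter : a.length + (x ++ t).length ≤ (p ++ v ++ p).length) : v <:+ u := by
  rw [← List.reverse_prefix]
  refine SqFree.prefix_of_square (p := p.reverse) (b := a.reverse) (s := t.reverse)
    (x := x.reverse) (t := s.reverse) ?_ (List.reverse_suffix.2 ha) ?_ ?_ ?_ ?_
  · simpa only [List.reverse_append, List.append_assoc] using hv.reverse
  · intro s t hst
    have := hva t.reverse s.reverse (List.reverse_injective (by
      simpa only [List.reverse_append, List.reverse_reverse, List.append_assoc] using hst))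
    simpa only [List.reverse_eq_iff, List.reverse_nil, List.reverse_append] using this
  · simpa only [ne_eq, List.reverse_eq_nil_iff] using hx
  · simpa only [List.reverse_append, List.append_assoc] using congrArg List.reverse hsq
  · simp only [List.length_append, List.length_reverse] at hcenter ⊢
    omega

theorem nice_square_prefix_suffix_general {α : Type*} {p a b u v : List α} (ha : a <+: p)
    (hb : b <:+ p) (hab : a.length + b.length ≤ p.length) (hu : SqFree (p ++ u ++ p))
    (hub : ∀ s t, s ++ b ++ t = p ++ u ++ p → t = [] ∨ t = u ++ p) (hv : SqFree (p ++ v ++ p))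
    (hva : ∀ s t, s ++ a ++ t = p ++ v ++ p → s = [] ∨ s = p ++ v)
    (h : ¬ SqFree (p ++ u ++ p ++ v ++ p)) :
    (u <+: v ∨ v <:+ u) ∧ (u.length = v.length → u = v) := by
  suffices huv : u <+: v ∨ v <:+ u from
    ⟨huv, fun hl => huv.elim (·.eq_of_length hl) fun hvu => (hvu.eq_of_length hl.symm).symm⟩
  simp only [SqFree, not_forall, not_not] at h
  obtain ⟨x, hx, s, t, hst⟩ := h
  have hsq : s ++ x ++ x ++ t = p ++ u ++ p ++ v ++ p := by rwa [List.append_assoc s x x]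
  by_cases hcenter : (s ++ x).length + b.length ≤ (p ++ u ++ p).length
  · exact .inl (hu.prefix_of_square hb hub hx hsq hcenter)
  · refine .inr (hv.suffix_of_square ha hva hx hsq ?_)
    have hlen := congrArg List.length hsq
    simp only [List.length_append] at hlen hcenter ⊢
    omega

theorem occCount_eq_card (w y : List (Fin 3)) :
    occCount w y = {i ∈ Finset.range y.length | (y.drop i).take w.length = w}.card := by
  simp only [occCount, List.countP_eq_length_filter, beq_eq_decide]
  rfl

theorem eq_or_eq_of_occCount_eq_two {w y s₁ t₁ s₂ t₂ s t : List (Fin 3)} (hw : w ≠ [])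
    (hy : occCount w y = 2) (h₁ : s₁ ++ w ++ t₁ = y) (h₂ : s₂ ++ w ++ t₂ = y)
    (hne : s₁.length ≠ s₂.length) (h : s ++ w ++ t = y) :
    s = s₁ ∧ t = t₁ ∨ s = s₂ ∧ t = t₂ := by
  have mem_occurrences {r r' : List (Fin 3)} (hr : r ++ w ++ r' = y) :
      r.length ∈ {i ∈ Finset.range y.length | (y.drop i).take w.length = w} := by
    have hwpos := List.length_pos_of_ne_nil hw
    simp only [← hr, List.append_assoc, Finset.mem_filter, Finset.mem_range, List.length_append,
      List.drop_left, List.take_left, and_true]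
    omega
  have eq_of_length_eq {r r' : List (Fin 3)} (hr : r ++ w ++ r' = y)
      (hl : s.length = r.length) : s = r ∧ t = r' := by
    rw [← hr, List.append_assoc, List.append_assoc] at h
    exact (List.append_inj h hl).imp_right List.append_cancel_left
  by_contra hcon
  rw [not_or] at hcon
  have hthree : 2 < occCount w y := by
    rw [occCount_eq_card, Finset.two_lt_card]
    exact ⟨_, mem_occurrences h, _, mem_occurrences h₁, _, mem_occurrences h₂,
      mt (eq_of_length_eq h₁) hcon.1, mt (eq_of_length_eq h₂) hcon.2, hne⟩
  omega

theorem IsNice.right_eq_of_append_phat_append {u s t : List (Fin 3)} (hu : IsNice u)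
    (h : s ++ phat ++ t = pal ++ u ++ pal) : t = [] ∨ t = u ++ pal := by
  obtain ⟨-, hcount, -⟩ := hu
  refine (eq_or_eq_of_occCount_eq_two (s₁ := pal ++ u ++ phat.reverse ++ [0]) (t₁ := [])
    (s₂ := phat.reverse ++ [0]) (t₂ := u ++ pal) (by decide) hcount ?_ ?_ ?_ h).imp
    And.right And.right
  · simp only [pal, List.append_assoc, List.append_nil, List.singleton_append]
  · simp only [pal, List.append_assoc, List.cons_append, List.nil_append]
  · simp only [pal, List.length_append, List.length_cons]
    omega

theorem IsNice.left_eq_of_append_phat_reverse_append {v s t : List (Fin 3)} (hv : IsNice v)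
    (h : s ++ phat.reverse ++ t = pal ++ v ++ pal) : s = [] ∨ s = pal ++ v := by
  obtain ⟨-, -, hcount⟩ := hv
  refine (eq_or_eq_of_occCount_eq_two (s₁ := []) (t₁ := 0 :: phat ++ v ++ pal) (s₂ := pal ++ v)
    (t₂ := 0 :: phat) (by decide) hcount ?_ ?_ ?_ h).imp And.left And.left
  · simp only [pal, List.append_assoc, List.nil_append]
  · simp only [pal, List.append_assoc]
  · simp only [pal, List.length_append, List.length_cons, List.length_nil]
    omega

/-- If `u` and `v` are nice and `p u p v p` is not square-free, then `u` is a prefix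
of `v` or `v` is a suffix of `u`; in particular if `|u| = |v|` then `u = v`. -/
theorem nice_square_prefix_suffix (u v : List (Fin 3)) (hu : IsNice u) (hv : IsNice v)
    (h : ¬ SqFree (pal ++ u ++ pal ++ v ++ pal)) :
    (u <+: v ∨ v <:+ u) ∧ (u.length = v.length → u = v) :=
  nice_square_prefix_suffix_general (List.prefix_append phat.reverse (0 :: phat))
    ⟨phat.reverse ++ [0], rfl⟩ (by decide) hu.1 (fun _ _ => hu.right_eq_of_append_phat_append) hv.1
    (fun _ _ => hv.left_eq_of_append_phat_reverse_append) h
end
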